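/- arXiv:2304.14879 — 3 statements merged into one kernel-verified Lean document; each statement's English description precedes it below -/
import Mathlib

section
/- Let s and N be positive integers, let A be an s×s complex matrix with eigenvalue decomposition A = X Λ X⁻¹, where X is invertible and Λ = diag(λ_1, …, λ_s), let M and K be N×N complex matrices, let Δt ∈ ℂ, and set B = I_s ⊗ M + Δt (A ⊗ K). Suppose the sN×sN preconditioning matrix W is monolithic with respect to X with blocks W_1, …, W_s, i.e. W = (X ⊗ I_N) · blockdiag(W_1, …, W_s) · (X⁻¹ ⊗ I_N), and that each W_i is invertible. Then the smoothing matrix S = I − W⁻¹ B is monolithic with respect to X with blocks S_i = I_N − W_i⁻¹ (M + Δt λ_i K), i.e. S = (X ⊗ I_N) · blockdiag(S_1, …, S_s) · (X⁻¹ ⊗ I_N). -/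
open Matrix Kronecker

/-- Block-diagonal matrix indexed by `Fin s × Fin N` whose `i`-th diagonal block is `Y i`. -/
def blockDiagFst {m n : ℕ} (Y : Fin m → Matrix (Fin n) (Fin n) ℂ) :
    Matrix (Fin m × Fin n) (Fin m × Fin n) ℂ :=
  Matrix.of fun p q => if p.1 = q.1 then Y p.1 p.2 q.2 else 0

/-!
For invertible `X`, sending a family of blocks to the monolithic matrix with these blocks is a
homomorphism from the product algebra of the blocks, so it commutes with sums, products and
inverses. Since `X` diagonalizes `A` and commutes with `1`, both `A ⊗ₖ K` and `1 ⊗ₖ M` lie in its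
image, and `1 - W⁻¹ * B` can therefore be computed block by block.
-/

section Monolithic

variable {m n R : Type*} [Fintype m] [DecidableEq m] [Fintype n] [DecidableEq n] [CommRing R]

/-- The matrix that is monolithic with respect to `X` with diagonal blocks `Y i`, as a linear
function of the family `Y`. Mathlib's `blockDiagonal` has the block index as second coordinate,
whereas `X ⊗ₖ 1` acts on the first one, hence the reindexing. -/
noncomputable def monolithic (X : Matrix m m R) :
    (m → Matrix n n R) →ₗ[R] Matrix (m × n) (m × n) R where
  toFun Y := (X ⊗ₖ (1 : Matrix n n R)) *
    reindex (Equiv.prodComm n m) (Equiv.prodComm n m) (blockDiagonal Y) *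
    (X⁻¹ ⊗ₖ (1 : Matrix n n R))
  map_add' Y Z := by
    simp only [blockDiagonal_add, reindex_apply, submatrix_add, Pi.add_apply, mul_add, add_mul]
  map_smul' c Y := by
    simp only [blockDiagonal_smul, reindex_apply, submatrix_smul, Pi.smul_apply, mul_smul_comm,
      smul_mul_assoc, RingHom.id_apply]

theorem monolithic_apply (X : Matrix m m R) (Y : m → Matrix n n R) :
    monolithic X Y = (X ⊗ₖ (1 : Matrix n n R)) *
      reindex (Equiv.prodComm n m) (Equiv.prodComm n m) (blockDiagonal Y) *
      (X⁻¹ ⊗ₖ (1 : Matrix n n R)) :=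
  rfl

theorem monolithic_smul_const (X : Matrix m m R) (d : m → R) (K : Matrix n n R) :
    monolithic X (fun i => d i • K) = (X * diagonal d * X⁻¹) ⊗ₖ K := by
  rw [monolithic_apply, ← diagonal_kronecker, ← mul_kronecker_mul, ← mul_kronecker_mul, one_mul,
    mul_one]

theorem monolithic_const {X : Matrix m m R} (hX : IsUnit X.det) (M : Matrix n n R) :
    monolithic X (fun _ => M) = (1 : Matrix m m R) ⊗ₖ M := by
  simpa only [one_smul, diagonal_one, mul_one, mul_nonsing_inv X hX] using
    monolithic_smul_const X (fun _ => 1) M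

theorem monolithic_one {X : Matrix m m R} (hX : IsUnit X.det) :
    monolithic X (1 : m → Matrix n n R) = 1 :=
  (monolithic_const hX 1).trans one_kronecker_one

theorem monolithic_mul {X : Matrix m m R} (hX : IsUnit X.det) (Y Z : m → Matrix n n R) :
    monolithic X (Y * Z) = monolithic X Y * monolithic X Z := by
  have hX_cancel : (X⁻¹ ⊗ₖ (1 : Matrix n n R)) * (X ⊗ₖ (1 : Matrix n n R)) = 1 := by
    rw [← mul_kronecker_mul, nonsing_inv_mul X hX, one_mul, one_kronecker_one]
  have h_blocks : reindex (Equiv.prodComm n m) (Equiv.prodComm n m) (blockDiagonal (Y * Z)) =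
      reindex (Equiv.prodComm n m) (Equiv.prodComm n m) (blockDiagonal Y) *
        reindex (Equiv.prodComm n m) (Equiv.prodComm n m) (blockDiagonal Z) :=
    map_mul ((reindexRingEquiv R (Equiv.prodComm n m)).toRingHom.comp
      (blockDiagonalRingHom n m R)) Y Z
  simp only [monolithic_apply, h_blocks, mul_assoc]
  rw [← mul_assoc (X⁻¹ ⊗ₖ (1 : Matrix n n R)) (X ⊗ₖ (1 : Matrix n n R)), hX_cancel, one_mul]

theorem inv_monolithic {X : Matrix m m R} (hX : IsUnit X.det) {Y : m → Matrix n n R}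
    (hY : ∀ i, IsUnit (Y i).det) :
    (monolithic X Y)⁻¹ = monolithic X (fun i => (Y i)⁻¹) := by
  have h_blocks : Y * (fun i => (Y i)⁻¹) = 1 := funext fun i => mul_nonsing_inv (Y i) (hY i)
  refine inv_eq_right_inv ?_
  rw [← monolithic_mul hX, h_blocks, monolithic_one hX]

theorem monolithic_pencil {X : Matrix m m R} (hX : IsUnit X.det) (d : m → R)
    (M K : Matrix n n R) (c : R) :
    monolithic X (fun i => M + (c * d i) • K) =
      (1 : Matrix m m R) ⊗ₖ M + c • ((X * diagonal d * X⁻¹) ⊗ₖ K) := by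
  have h_blocks : (fun i => M + (c * d i) • K) = (fun _ => M) + c • fun i => d i • K :=
    funext fun i => by simp only [Pi.add_apply, Pi.smul_apply, mul_smul]
  rw [h_blocks, map_add, map_smul, monolithic_const hX, monolithic_smul_const]

theorem stmt5_general (A X : Matrix m m R) (lam : m → R) (hX : IsUnit X.det)
    (hA : A = X * diagonal lam * X⁻¹) (M K : Matrix n n R) (Δt : R)
    (W : Matrix (m × n) (m × n) R) (Wb : m → Matrix n n R) (hW : W = monolithic X Wb)
    (hWb : ∀ i, IsUnit (Wb i).det) :
    1 - W⁻¹ * ((1 : Matrix m m R) ⊗ₖ M + Δt • (A ⊗ₖ K)) =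
      monolithic X (fun i => 1 - (Wb i)⁻¹ * (M + (Δt * lam i) • K)) := by
  calc 1 - W⁻¹ * ((1 : Matrix m m R) ⊗ₖ M + Δt • (A ⊗ₖ K))
    _ = monolithic X 1 - monolithic X (fun i => (Wb i)⁻¹) *
          monolithic X (fun i => M + (Δt * lam i) • K) := by
      rw [monolithic_one hX, hW, inv_monolithic hX hWb, hA, monolithic_pencil hX]
    _ = monolithic X (1 - (fun i => (Wb i)⁻¹) * fun i => M + (Δt * lam i) • K) := by
      rw [map_sub, monolithic_mul hX]

end Monolithic

theorem monolithic_eq_blockDiagFst {s N : ℕ} (X : Matrix (Fin s) (Fin s) ℂ)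
    (Y : Fin s → Matrix (Fin N) (Fin N) ℂ) :
    monolithic X Y = (X ⊗ₖ (1 : Matrix (Fin N) (Fin N) ℂ)) * blockDiagFst Y *
      (X⁻¹ ⊗ₖ (1 : Matrix (Fin N) (Fin N) ℂ)) :=
  rfl

theorem stmt5 (s N : ℕ) (hs : 0 < s) (hN : 0 < N)
    (A X : Matrix (Fin s) (Fin s) ℂ) (lam : Fin s → ℂ)
    (hX : IsUnit X.det)
    (hA : A = X * Matrix.diagonal lam * X⁻¹)
    (M K : Matrix (Fin N) (Fin N) ℂ) (Δt : ℂ)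
    (W : Matrix (Fin s × Fin N) (Fin s × Fin N) ℂ)
    (Wb : Fin s → Matrix (Fin N) (Fin N) ℂ)
    (hW : W = (X ⊗ₖ (1 : Matrix (Fin N) (Fin N) ℂ)) * blockDiagFst Wb *
      (X⁻¹ ⊗ₖ (1 : Matrix (Fin N) (Fin N) ℂ)))
    (hWb : ∀ i, IsUnit (Wb i).det) :
    1 - W⁻¹ * ((1 : Matrix (Fin s) (Fin s) ℂ) ⊗ₖ M + Δt • (A ⊗ₖ K)) =
      (X ⊗ₖ (1 : Matrix (Fin N) (Fin N) ℂ)) *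
        blockDiagFst (fun i => 1 - (Wb i)⁻¹ * (M + (Δt * lam i) • K)) *
        (X⁻¹ ⊗ₖ (1 : Matrix (Fin N) (Fin N) ℂ)) := by
  rw [← monolithic_eq_blockDiagFst] at hW ⊢
  exact stmt5_general A X lam hX hA M K Δt W Wb hW hWb
end

section
/- Let s, N_h, N_H be positive integers, let A be an s×s complex matrix with eigenvalue decomposition A = X Λ X⁻¹, where X is invertible and Λ = diag(λ_1, …, λ_s), and let Δt ∈ ℂ. Let M_h, K_h be N_h×N_h complex matrices and M_H, K_H be N_H×N_H complex matrices, and set B_h = I_s ⊗ M_h + Δt (A ⊗ K_h) and B_H = I_s ⊗ M_H + Δt (A ⊗ K_H). Let P be an N_h×N_H matrix and R an N_H×N_h matrix, and set 𝐏 = I_s ⊗ P and 𝐑 = I_s ⊗ R. If each characteristic coarse block B_{H,λ_i Δt} = M_H + Δt λ_i K_H is invertible, then B_H is invertible and the coarse-grid correction matrix satisfies I − 𝐏 B_H⁻¹ 𝐑 B_h = (X ⊗ I_{N_h}) · blockdiag( I − P (M_H + Δt λ_1 K_H)⁻¹ R (M_h + Δt λ_1 K_h), …, I − P (M_H + Δt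 λ_s K_H)⁻¹ R (M_h + Δt λ_s K_h) ) · (X⁻¹ ⊗ I_{N_h}); in particular, the coarse-grid correction matrix is monolithic with respect to X. -/
open Matrix Kronecker

/-- `Y` is monolithic with respect to `X` if `(X⁻¹ ⊗ I) Y (X ⊗ I)` is block diagonal. -/
def Monolithic {s N : ℕ} (X : Matrix (Fin s) (Fin s) ℂ)
    (Y : Matrix (Fin s × Fin N) (Fin s × Fin N) ℂ) : Prop :=
  ∃ D : Fin s → Matrix (Fin N) (Fin N) ℂ,
    (X⁻¹ ⊗ₖ (1 : Matrix (Fin N) (Fin N) ℂ)) * Y * (X ⊗ₖ (1 : Matrix (Fin N) (Fin N) ℂ)) =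
      blockDiagFst D

/- The matrices `(X ⊗ I) blockdiag(D₁, …, Dₛ) (X⁻¹ ⊗ I)` with a fixed invertible `X` are closed
under sums, products and, where they exist, inverses, all computed block by block. Since
`A = X Λ X⁻¹`, each of `B_h`, `B_H`, `𝐏` and `𝐑` has this form, hence so does the coarse-grid
correction, and its blocks are the coarse-grid corrections of the blocks. -/

section

variable {ι m n k α : Type*} [DecidableEq ι]

/-- The block-diagonal matrix with blocks `D i`, as `Matrix.blockDiagonal` but with the block index
in the first component, as in `1 ⊗ₖ M`. It generalizes `blockDiagFst` to rectangular
blocks. -/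
def leftBlockDiagonal [Zero α] (D : ι → Matrix m n α) : Matrix (ι × m) (ι × n) α :=
  (blockDiagonal D).reindex (Equiv.prodComm m ι) (Equiv.prodComm n ι)

lemma leftBlockDiagonal_add [AddZeroClass α] (D E : ι → Matrix m n α) :
    leftBlockDiagonal (fun i => D i + E i) = leftBlockDiagonal D + leftBlockDiagonal E :=
  congrArg (reindex _ _) (blockDiagonal_add D E)

lemma leftBlockDiagonal_sub [AddGroup α] (D E : ι → Matrix m n α) :
    leftBlockDiagonal (fun i => D i - E i) = leftBlockDiagonal D - leftBlockDiagonal E :=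
  congrArg (reindex _ _) (blockDiagonal_sub D E)

lemma leftBlockDiagonal_smul {β : Type*} [Zero α] [SMulZeroClass β α] (c : β)
    (D : ι → Matrix m n α) :
    leftBlockDiagonal (fun i => c • D i) = c • leftBlockDiagonal D :=
  congrArg (reindex _ _) (blockDiagonal_smul c D)

variable [Fintype ι]

lemma leftBlockDiagonal_mul [NonUnitalNonAssocSemiring α] [Fintype n]
    (D : ι → Matrix m n α) (E : ι → Matrix n k α) :
    leftBlockDiagonal (fun i => D i * E i) = leftBlockDiagonal D * leftBlockDiagonal E := by
  simp only [leftBlockDiagonal, blockDiagonal_mul, reindex_apply, submatrix_mul_equiv]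

variable [CommRing α]

lemma det_leftBlockDiagonal [Fintype m] [DecidableEq m] (D : ι → Matrix m m α) :
    (leftBlockDiagonal D).det = ∏ i, (D i).det := by
  rw [leftBlockDiagonal, det_reindex_self, det_blockDiagonal]

variable [Fintype m] [DecidableEq m] [Fintype n] [DecidableEq n] [Fintype k] [DecidableEq k]

/-- A matrix `Y` with blocks indexed by `ι` is monolithic with respect to `X` if
`(X⁻¹ ⊗ I) Y (X ⊗ I)` is block diagonal. It generalizes `Monolithic` to rectangular blocks over a
commutative ring. -/
def IsMonolithic (X : Matrix ι ι α) (Y : Matrix (ι × m) (ι × n) α) : Prop :=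
  ∃ D : ι → Matrix m n α,
    (X⁻¹ ⊗ₖ (1 : Matrix m m α)) * Y * (X ⊗ₖ (1 : Matrix n n α)) = leftBlockDiagonal D

/-- The matrix `(X ⊗ I) blockdiag(D) (X⁻¹ ⊗ I)`, which for invertible `X` is the monolithic matrix
with characteristic blocks `D i`. -/
noncomputable def monolithicOf (X : Matrix ι ι α) (D : ι → Matrix m n α) :
    Matrix (ι × m) (ι × n) α :=
  (X ⊗ₖ (1 : Matrix m m α)) * leftBlockDiagonal D * (X⁻¹ ⊗ₖ (1 : Matrix n n α))

/-- The error-propagation matrix `I - P B_H⁻¹ R B_h` of a two-grid correction with prolongation `P`,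
coarse operator `BH`, restriction `R` and fine operator `Bh`. -/
noncomputable def coarseGridCorrection (P : Matrix m n α) (BH : Matrix n n α) (R : Matrix n m α)
    (Bh : Matrix m m α) : Matrix m m α :=
  1 - P * BH⁻¹ * R * Bh

lemma monolithicOf_add (X : Matrix ι ι α) (D E : ι → Matrix m n α) :
    monolithicOf X (fun i => D i + E i) = monolithicOf X D + monolithicOf X E := by
  simp only [monolithicOf, leftBlockDiagonal_add, Matrix.mul_add, Matrix.add_mul]

lemma monolithicOf_sub (X : Matrix ι ι α) (D E : ι → Matrix m n α) :
    monolithicOf X (fun i => D i - E i) = monolithicOf X D - monolithicOf X E := by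
  simp only [monolithicOf, leftBlockDiagonal_sub, Matrix.mul_sub, Matrix.sub_mul]

lemma monolithicOf_smul (X : Matrix ι ι α) (c : α) (D : ι → Matrix m n α) :
    monolithicOf X (fun i => c • D i) = c • monolithicOf X D := by
  simp only [monolithicOf, leftBlockDiagonal_smul, Matrix.mul_smul, Matrix.smul_mul]

lemma conj_diagonal_kronecker_eq_monolithicOf (X : Matrix ι ι α) (lam : ι → α) (K : Matrix m n α) :
    (X * diagonal lam * X⁻¹) ⊗ₖ K = monolithicOf X fun i => lam i • K := by
  rw [monolithicOf, leftBlockDiagonal, ← diagonal_kronecker, ← mul_kronecker_mul,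
    ← mul_kronecker_mul, Matrix.one_mul, Matrix.mul_one]

variable {X : Matrix ι ι α}

lemma inv_kronecker_one_mul_kronecker_one (hX : IsUnit X.det) :
    (X⁻¹ ⊗ₖ (1 : Matrix m m α)) * (X ⊗ₖ (1 : Matrix m m α)) = 1 := by
  rw [← mul_kronecker_mul, nonsing_inv_mul X hX, Matrix.one_mul, one_kronecker_one]

lemma inv_kronecker_one_mul_monolithicOf_mul (hX : IsUnit X.det) (D : ι → Matrix m n α) :
    (X⁻¹ ⊗ₖ (1 : Matrix m m α)) * monolithicOf X D * (X ⊗ₖ (1 : Matrix n n α)) =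
      leftBlockDiagonal D := by
  rw [monolithicOf, Matrix.mul_assoc, Matrix.mul_assoc _ (X⁻¹ ⊗ₖ _),
    inv_kronecker_one_mul_kronecker_one hX, Matrix.mul_one, ← Matrix.mul_assoc,
    inv_kronecker_one_mul_kronecker_one hX, Matrix.one_mul]

lemma isMonolithic_monolithicOf (hX : IsUnit X.det) (D : ι → Matrix m n α) :
    IsMonolithic X (monolithicOf X D) :=
  ⟨D, inv_kronecker_one_mul_monolithicOf_mul hX D⟩

lemma monolithicOf_mul (hX : IsUnit X.det) (D : ι → Matrix m n α) (E : ι → Matrix n k α) :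
    monolithicOf X (fun i => D i * E i) = monolithicOf X D * monolithicOf X E := by
  simp only [monolithicOf, leftBlockDiagonal_mul, Matrix.mul_assoc]
  rw [← Matrix.mul_assoc (X⁻¹ ⊗ₖ _) (X ⊗ₖ _), inv_kronecker_one_mul_kronecker_one hX,
    Matrix.one_mul]

lemma one_kronecker_eq_monolithicOf (hX : IsUnit X.det) (M : Matrix m n α) :
    (1 : Matrix ι ι α) ⊗ₖ M = monolithicOf X fun _ => M := by
  simpa only [diagonal_one, Matrix.mul_one, mul_nonsing_inv X hX, one_smul] using
    conj_diagonal_kronecker_eq_monolithicOf X (fun _ => 1) M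

lemma monolithicOf_one (hX : IsUnit X.det) :
    monolithicOf X (fun _ => (1 : Matrix m m α)) = 1 := by
  rw [← one_kronecker_eq_monolithicOf hX, one_kronecker_one]

lemma det_monolithicOf (hX : IsUnit X.det) (D : ι → Matrix m m α) :
    (monolithicOf X D).det = ∏ i, (D i).det := by
  rw [← det_leftBlockDiagonal, ← inv_kronecker_one_mul_monolithicOf_mul hX D, det_mul, det_mul,
    mul_right_comm, ← det_mul, inv_kronecker_one_mul_kronecker_one hX, det_one, one_mul]

lemma isUnit_det_monolithicOf_iff (hX : IsUnit X.det) {D : ι → Matrix m m α} :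
    IsUnit (monolithicOf X D).det ↔ ∀ i, IsUnit (D i).det := by
  rw [det_monolithicOf hX, IsUnit.prod_univ_iff]

lemma inv_monolithicOf (hX : IsUnit X.det) {D : ι → Matrix m m α} (hD : ∀ i, IsUnit (D i).det) :
    (monolithicOf X D)⁻¹ = monolithicOf X fun i => (D i)⁻¹ := by
  refine inv_eq_right_inv ?_
  simp only [← monolithicOf_mul hX, mul_nonsing_inv _ (hD _), monolithicOf_one hX]

lemma one_kronecker_add_smul_kronecker_eq_monolithicOf (hX : IsUnit X.det) (lam : ι → α) (t : α)
    (M K : Matrix m n α) :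
    (1 : Matrix ι ι α) ⊗ₖ M + t • ((X * diagonal lam * X⁻¹) ⊗ₖ K) =
      monolithicOf X fun i => M + (t * lam i) • K := by
  rw [one_kronecker_eq_monolithicOf hX, conj_diagonal_kronecker_eq_monolithicOf,
    ← monolithicOf_smul, ← monolithicOf_add]
  simp only [mul_smul]

lemma coarseGridCorrection_monolithicOf (hX : IsUnit X.det) (P : ι → Matrix m n α)
    {BH : ι → Matrix n n α} (hBH : ∀ i, IsUnit (BH i).det) (R : ι → Matrix n m α)
    (Bh : ι → Matrix m m α) :
    coarseGridCorrection (monolithicOf X P) (monolithicOf X BH) (monolithicOf X R)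
        (monolithicOf X Bh) =
      monolithicOf X fun i => coarseGridCorrection (P i) (BH i) (R i) (Bh i) := by
  simp only [coarseGridCorrection, inv_monolithicOf hX hBH, ← monolithicOf_mul hX,
    ← monolithicOf_one hX, ← monolithicOf_sub]

theorem stmt6_general {A : Matrix ι ι α} {lam : ι → α} (hX : IsUnit X.det)
    (hA : A = X * diagonal lam * X⁻¹) (Δt : α) (Mh Kh : Matrix m m α) {MH KH : Matrix n n α}
    (P : Matrix m n α) (R : Matrix n m α) (hBH : ∀ i, IsUnit (MH + (Δt * lam i) • KH).det) :
    let BH := (1 : Matrix ι ι α) ⊗ₖ MH + Δt • (A ⊗ₖ KH)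
    let Bh := (1 : Matrix ι ι α) ⊗ₖ Mh + Δt • (A ⊗ₖ Kh)
    let C := coarseGridCorrection ((1 : Matrix ι ι α) ⊗ₖ P) BH ((1 : Matrix ι ι α) ⊗ₖ R) Bh
    IsUnit BH.det ∧
    C = monolithicOf X (fun i =>
      coarseGridCorrection P (MH + (Δt * lam i) • KH) R (Mh + (Δt * lam i) • Kh)) ∧
    IsMonolithic X C := by
  subst hA
  intro BH Bh C
  have hBH_eq : BH = monolithicOf X fun i => MH + (Δt * lam i) • KH :=
    one_kronecker_add_smul_kronecker_eq_monolithicOf hX lam Δt MH KH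
  have hBh_eq : Bh = monolithicOf X fun i => Mh + (Δt * lam i) • Kh :=
    one_kronecker_add_smul_kronecker_eq_monolithicOf hX lam Δt Mh Kh
  have hC : C = monolithicOf X fun i =>
      coarseGridCorrection P (MH + (Δt * lam i) • KH) R (Mh + (Δt * lam i) • Kh) := by
    simp only [C, hBH_eq, hBh_eq, one_kronecker_eq_monolithicOf hX,
      coarseGridCorrection_monolithicOf hX _ hBH]
  refine ⟨?_, hC, ?_⟩
  · rwa [hBH_eq, isUnit_det_monolithicOf_iff hX]
  · rw [hC]
    exact isMonolithic_monolithicOf hX _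

end

theorem stmt6 (s Nh NH : ℕ) (hs : 0 < s) (hNh : 0 < Nh) (hNH : 0 < NH)
    (A X : Matrix (Fin s) (Fin s) ℂ) (lam : Fin s → ℂ)
    (hX : IsUnit X.det)
    (hA : A = X * Matrix.diagonal lam * X⁻¹)
    (Δt : ℂ)
    (Mh Kh : Matrix (Fin Nh) (Fin Nh) ℂ) (MH KH : Matrix (Fin NH) (Fin NH) ℂ)
    (P : Matrix (Fin Nh) (Fin NH) ℂ) (R : Matrix (Fin NH) (Fin Nh) ℂ)
    (hBH : ∀ i, IsUnit (MH + (Δt * lam i) • KH).det) :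
    IsUnit ((1 : Matrix (Fin s) (Fin s) ℂ) ⊗ₖ MH + Δt • (A ⊗ₖ KH)).det ∧
    1 - ((1 : Matrix (Fin s) (Fin s) ℂ) ⊗ₖ P) *
          ((1 : Matrix (Fin s) (Fin s) ℂ) ⊗ₖ MH + Δt • (A ⊗ₖ KH))⁻¹ *
          ((1 : Matrix (Fin s) (Fin s) ℂ) ⊗ₖ R) *
          ((1 : Matrix (Fin s) (Fin s) ℂ) ⊗ₖ Mh + Δt • (A ⊗ₖ Kh)) =
      (X ⊗ₖ (1 : Matrix (Fin Nh) (Fin Nh) ℂ)) *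
        blockDiagFst (fun i =>
          1 - P * (MH + (Δt * lam i) • KH)⁻¹ * R * (Mh + (Δt * lam i) • Kh)) *
        (X⁻¹ ⊗ₖ (1 : Matrix (Fin Nh) (Fin Nh) ℂ)) ∧
    Monolithic X
      (1 - ((1 : Matrix (Fin s) (Fin s) ℂ) ⊗ₖ P) *
          ((1 : Matrix (Fin s) (Fin s) ℂ) ⊗ₖ MH + Δt • (A ⊗ₖ KH))⁻¹ *
          ((1 : Matrix (Fin s) (Fin s) ℂ) ⊗ₖ R) *
          ((1 : Matrix (Fin s) (Fin s) ℂ) ⊗ₖ Mh + Δt • (A ⊗ₖ Kh))) :=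
  stmt6_general hX hA Δt Mh Kh P R hBH
end

section
/- Let s and N be positive integers and let X be an invertible s×s complex matrix. If an sN×sN complex matrix T is monolithic with respect to X with blocks T_1, …, T_s, then the associated linear iteration converges, i.e. ρ(T) < 1, if and only if ρ(T_i) < 1 for every i with 1 ≤ i ≤ s; that is, the stage-coupled two-grid iteration converges if and only if the two-grid iteration for each characteristic stage converges. -/
open Matrix Kronecker

/-! An `s × s` array of `N × N` matrices is a matrix over the noncommutative ring of `N × N`
matrices. In this reading `X ⊗ₖ 1` is `X` with its entries replaced by scalar matrices, and a
monolithic matrix is one that `X` conjugates to a diagonal matrix. Conjugation preserves the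
spectrum, and `λ - diagonal d` is invertible if and only if every `λ - d i` is, so the spectrum is
the union of the spectra of the blocks and the spectral radius is the maximum of theirs. -/

theorem iSup_lt_iff_of_finite {ι α : Type*} [Finite ι] [CompleteLinearOrder α] {f : ι → α} {a : α}
    (ha : ⊥ < a) : (⨆ i, f i) < a ↔ ∀ i, f i < a := by
  have := Fintype.ofFinite ι
  simp only [← Finset.sup_univ_eq_iSup, Finset.sup_lt_iff ha, Finset.mem_univ, forall_const]

theorem spectralRadius_algEquiv_apply {𝕜 A B : Type*} [NormedField 𝕜] [Ring A] [Ring B]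
    [Algebra 𝕜 A] [Algebra 𝕜 B] (e : A ≃ₐ[𝕜] B) (a : A) :
    spectralRadius 𝕜 (e a) = spectralRadius 𝕜 a := by
  simp only [spectralRadius, AlgEquiv.spectrum_eq]

section Diagonal

variable {ι A : Type*} [Fintype ι] [DecidableEq ι]

theorem isUnit_diagonal_iff_forall [Semiring A] {d : ι → A} :
    IsUnit (diagonal d) ↔ ∀ i, IsUnit (d i) := by
  rw [← Pi.isUnit_iff]
  refine ⟨fun h => ?_, fun h => h.map (diagonalRingHom ι A)⟩
  obtain ⟨M, hdM, hMd⟩ := isUnit_iff_exists.mp h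
  -- With no determinants over a noncommutative `A`, use the diagonal of an inverse `M` as `d⁻¹`.
  refine isUnit_iff_exists.mpr ⟨M.diag, funext fun i => ?_, funext fun i => ?_⟩
  · simpa using congr_fun₂ hdM i i
  · simpa using congr_fun₂ hMd i i

theorem spectrum_diagonal_eq_iUnion {R : Type*} [CommSemiring R] [Ring A] [Algebra R A]
    (d : ι → A) : spectrum R (diagonal d) = ⋃ i, spectrum R (d i) := by
  ext r
  have resolvent_eq : algebraMap R (Matrix ι ι A) r - diagonal d =
      diagonal fun i => algebraMap R A r - d i := by
    simp only [algebraMap_eq_diagonal, diagonal_sub, Pi.algebraMap_apply]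
  simp only [Set.mem_iUnion, spectrum.mem_iff, resolvent_eq, isUnit_diagonal_iff_forall, not_forall]

theorem stmt9_general {𝕜 : Type*} [NormedField 𝕜] [Ring A] [Algebra 𝕜 A]
    (P : (Matrix ι ι A)ˣ) (T : Matrix ι ι A) (d : ι → A)
    (hT : (↑P⁻¹ : Matrix ι ι A) * T * (P : Matrix ι ι A) = diagonal d) :
    spectralRadius 𝕜 T = ⨆ i, spectralRadius 𝕜 (d i) := by
  have spectrum_eq : spectrum 𝕜 T = ⋃ i, spectrum 𝕜 (d i) := by
    rw [← spectrum_diagonal_eq_iUnion, ← hT, spectrum.units_conjugate']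
  simp only [spectralRadius, spectrum_eq, iSup_iUnion]

end Diagonal

section Blocks

variable {ι n : Type*} [Fintype ι] [DecidableEq ι] [Fintype n] [DecidableEq n]

theorem compAlgEquiv_map_algebraMap {R : Type*} [CommSemiring R] (X : Matrix ι ι R) :
    compAlgEquiv ι n R R (X.map (algebraMap R (Matrix n n R))) = X ⊗ₖ (1 : Matrix n n R) := by
  ext ⟨i, k⟩ ⟨j, l⟩
  simp [algebraMap_matrix_apply, one_apply]

theorem spectralRadius_eq_iSup_of_kronecker_one_conj {𝕜 : Type*} [NormedField 𝕜]
    {X : Matrix ι ι 𝕜} (hX : IsUnit X.det) {T : Matrix (ι × n) (ι × n) 𝕜}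
    {d : ι → Matrix n n 𝕜}
    (hT : (X⁻¹ ⊗ₖ (1 : Matrix n n 𝕜)) * T * (X ⊗ₖ (1 : Matrix n n 𝕜)) =
      compAlgEquiv ι n 𝕜 𝕜 (diagonal d)) :
    spectralRadius 𝕜 T = ⨆ i, spectralRadius 𝕜 (d i) := by
  let e := compAlgEquiv ι n 𝕜 𝕜
  let P : (Matrix ι ι (Matrix n n 𝕜))ˣ :=
    Units.map (algebraMap 𝕜 (Matrix n n 𝕜)).mapMatrix.toMonoidHom (X.nonsingInvUnit hX)
  have map_P : e P = X ⊗ₖ (1 : Matrix n n 𝕜) := compAlgEquiv_map_algebraMap X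
  have map_P_inv : e ↑P⁻¹ = X⁻¹ ⊗ₖ (1 : Matrix n n 𝕜) := compAlgEquiv_map_algebraMap X⁻¹
  have conj_eq : (↑P⁻¹ : Matrix ι ι (Matrix n n 𝕜)) * e.symm T * P = diagonal d :=
    e.injective <| by rw [map_mul, map_mul, map_P, map_P_inv, e.apply_symm_apply, hT]
  rw [← spectralRadius_algEquiv_apply e.symm, stmt9_general P (e.symm T) d conj_eq]

end Blocks

theorem blockDiagFst_eq_compAlgEquiv_diagonal {m n : ℕ} (Y : Fin m → Matrix (Fin n) (Fin n) ℂ) :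
    blockDiagFst Y = compAlgEquiv (Fin m) (Fin n) ℂ ℂ (diagonal Y) := by
  ext ⟨i, k⟩ ⟨j, l⟩
  by_cases hij : i = j <;> simp [blockDiagFst, hij]

theorem stmt9 (s N : ℕ) (hs : 0 < s) (hN : 0 < N)
    (X : Matrix (Fin s) (Fin s) ℂ) (hX : IsUnit X.det)
    (T : Matrix (Fin s × Fin N) (Fin s × Fin N) ℂ)
    (Tb : Fin s → Matrix (Fin N) (Fin N) ℂ)
    (hT : (X⁻¹ ⊗ₖ (1 : Matrix (Fin N) (Fin N) ℂ)) * T *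
      (X ⊗ₖ (1 : Matrix (Fin N) (Fin N) ℂ)) = blockDiagFst Tb) :
    spectralRadius ℂ T < 1 ↔ ∀ i : Fin s, spectralRadius ℂ (Tb i) < 1 := by
  rw [blockDiagFst_eq_compAlgEquiv_diagonal] at hT
  rw [spectralRadius_eq_iSup_of_kronecker_one_conj hX hT, iSup_lt_iff_of_finite zero_lt_one]
end
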